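/- arXiv:2503.17572 — 2 statements merged into one kernel-verified Lean document; each statement's English description precedes it below -/
import Mathlib

section
/- The collections [Inf G Mon Bc] and [Inf G Mon^d Bc] are incomparable: there is a class of languages in [Inf G Mon Bc] \ [Inf G Mon^d Bc] and a class of languages in [Inf G Mon^d Bc] \ [Inf G Mon Bc]. -/
open Filter Classical

namespace InfBc

/-! ### Basic notions: r.e. sets, informants, learners -/

/-- The `e`-th recursively enumerable set (via an acceptable numbering of
partial computable functions, `W e = dom φ_e`). -/
def W (e : ℕ) : Set ℕ := {x | ((Denumerable.ofNat Nat.Partrec.Code e).eval x).Dom}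

/-- A language is recursively enumerable. -/
def RE (L : Set ℕ) : Prop := ∃ e, W e = L

abbrev Datum := ℕ × Bool
abbrev Seq := List Datum
abbrev Informant := ℕ → Datum
abbrev HypSeq := ℕ → Part ℕ
/-- Learners are partial functions; all input types are coded into `ℕ`. -/
abbrev Learner := ℕ →. ℕ
abbrev Restriction := HypSeq → Informant → Prop

/-- Positive information of an infinite sequence. -/
def posI (I : Informant) : Set ℕ := {x | ∃ n, I n = (x, true)}
/-- Negative information of an infinite sequence. -/
def negI (I : Informant) : Set ℕ := {x | ∃ n, I n = (x, false)}

/-- `I` is an informant for the language `L`. -/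
def IsInformant (I : Informant) (L : Set ℕ) : Prop := posI I = L ∧ negI I = Lᶜ

/-- `I` is an informant (for some language), i.e. `I ∈ Inf`. -/
def IsInf (I : Informant) : Prop := IsInformant I (posI I)

/-- `I` is a canonical informant. -/
def Canonical (I : Informant) : Prop := ∀ x, I x = (x, true) ∨ I x = (x, false)

/-- `I[n]`, the length-`n` initial segment of `I`. -/
def segment (I : Informant) (n : ℕ) : Seq := (List.range n).map I

/-- Positive information of a finite sequence. -/
def posS (σ : Seq) : Set ℕ := {x | (x, true) ∈ σ}
/-- Negative information of a finite sequence. -/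
def negS (σ : Seq) : Set ℕ := {x | (x, false) ∈ σ}
/-- The content of a finite sequence, as a set. -/
def contentS (σ : Seq) : Set Datum := {a | a ∈ σ}

/-! ### Interaction operators -/

abbrev InteractionOperator := Learner → Informant → HypSeq

/-- Full-information (Gold-style) interaction: `G(h,I)(i) = h(I[i])`. -/
def Gop : InteractionOperator := fun h I i => h (Encodable.encode (segment I i))

/-- Set-driven interaction: `Sd(h,I)(i) = h(content(I[i]))`. -/
def Sdop : InteractionOperator := fun h I i => h (Encodable.encode (segment I i).toFinset)

/-- The iterated evaluation of an iterative learner on a finite sequence: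
start with the initial hypothesis `h(none)` and feed the data one by one. -/
def iterExtend (h : Learner) (σ : Seq) : Part ℕ :=
  σ.foldl (fun pe a => pe.bind fun e => h (Encodable.encode (some (e, a))))
    (h (Encodable.encode (none : Option (ℕ × Datum))))

/-- Iterative interaction: `It(h,I)(i)` is obtained by feeding `I[i]` one datum
at a time, each time updating the previous hypothesis. -/
def Itop : InteractionOperator := fun h I i => iterExtend h (segment I i)

/-- An iterative learner is confluent if the order and multiplicity in which
the content is presented does not matter. -/
def ConfluentLearner (h : Learner) : Prop :=
  ∀ σ τ : Seq, contentS σ = contentS τ → iterExtend h σ = iterExtend h τ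

/-- Confluently iterative interaction. -/
noncomputable def CflItop : InteractionOperator := fun h I i =>
  if ConfluentLearner h then iterExtend h (segment I i) else Part.none

/-- `β ≼ β'`: every (partial computable) `β`-learner can be translated into a
`β'`-learner with the same hypothesis sequence on every informant. -/
def OpLe (β β' : InteractionOperator) : Prop :=
  ∀ h : Learner, Partrec h → ∃ h' : Learner, Partrec h' ∧
    ∀ I : Informant, IsInf I → ∀ n, β h I n = β' h' I n

/-! ### Learning restrictions -/

/-- The trivial restriction `T`. -/
def TT : Restriction := fun _ _ => True

/-- Explanatory identification. -/
def Ex : Restriction := fun p I =>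
  ∃ q, W q = posI I ∧ ∀ᶠ n in atTop, p n = Part.some q

/-- Behaviorally correct identification. -/
def Bc : Restriction := fun p I => ∀ᶠ n in atTop, ∃ e ∈ p n, W e = posI I

/-- Consistency of a hypothesis with a finite sequence of data. -/
def ConsH (e : ℕ) (σ : Seq) : Prop := posS σ ⊆ W e ∧ negS σ ∩ W e = ∅

/-- Consistency of a hypothesis sequence with an informant. -/
def Cons : Restriction := fun p I => ∀ n, ∃ e ∈ p n, ConsH e (segment I n)

/-- Strongly monotone. -/
def SMon : Restriction := fun p _ =>
  ∀ s t, s ≤ t → ∀ e ∈ p s, ∀ e' ∈ p t, W e ⊆ W e'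

/-- Dual strongly monotone. -/
def SMond : Restriction := fun p _ =>
  ∀ s t, s ≤ t → ∀ e ∈ p s, ∀ e' ∈ p t, W e' ⊆ W e

/-- Monotone. -/
def Mon : Restriction := fun p I =>
  ∀ s t, s ≤ t → ∀ e ∈ p s, ∀ e' ∈ p t, W e ∩ posI I ⊆ W e' ∩ posI I

/-- Dual monotone. -/
def Mond : Restriction := fun p I =>
  ∀ s t, s ≤ t → ∀ e ∈ p s, ∀ e' ∈ p t, (W e)ᶜ ∩ negI I ⊆ (W e')ᶜ ∩ negI I

/-- Weakly monotone. -/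
def WMon : Restriction := fun p I =>
  ∀ s t, s ≤ t → ∀ e ∈ p s, ConsH e (segment I t) → ∀ e' ∈ p t, W e ⊆ W e'

/-- Dual weakly monotone. -/
def WMond : Restriction := fun p I =>
  ∀ s t, s ≤ t → ∀ e ∈ p s, ConsH e (segment I t) → ∀ e' ∈ p t, W e' ⊆ W e

/-- Cautious. -/
def Caut : Restriction := fun p _ =>
  ∀ s t, s < t → ∀ e ∈ p s, ∀ e' ∈ p t, ¬ W e' ⊂ W e

/-- Target cautious. -/
def CautTar : Restriction := fun p I =>
  ∀ s, ∀ e ∈ p s, ¬ posI I ⊂ W e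

/-- Finitely cautious. -/
def CautFin : Restriction := fun p _ =>
  ∀ s t, s < t → ∀ e ∈ p s, ∀ e' ∈ p t, W e' ⊂ W e → (W e').Infinite

/-- Infinitely cautious. -/
def CautInf : Restriction := fun p _ =>
  ∀ s t, s < t → ∀ e ∈ p s, ∀ e' ∈ p t, W e' ⊂ W e → (W e').Finite

/-! ### Learnability -/

/-- The class of admissible learners: all partial computable learners. -/
def AllL : Learner → Prop := fun _ => True
/-- The class of admissible learners: total computable learners (`ℛ`). -/
def TotalL : Learner → Prop := fun h => ∀ x, (h x).Dom
/-- Admissible informants: all informants (`Inf`). -/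
def AllI : Informant → Prop := fun _ => True

/-- `h` learns `L` in the setting given by admissible informants `P`,
interaction operator `β` and local restriction `δ`. -/
def LearnsWith (P : Informant → Prop) (β : InteractionOperator) (δ : Restriction)
    (h : Learner) (L : Set ℕ) : Prop :=
  RE L ∧ ∀ I : Informant, P I → IsInformant I L → δ (β h I) I

/-- `[τ(α) C P β δ]`: the collection of all classes of languages learnable by
some learner in `C` that satisfies the global restriction `α` on all admissible
informants, under interaction operator `β` and local restriction `δ`. -/
def Learnable (α : Restriction) (C : Learner → Prop) (P : Informant → Prop)
    (β : InteractionOperator) (δ : Restriction) : Set (Set (Set ℕ)) :=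
  {𝓛 | ∃ h : Learner, Partrec h ∧ C h ∧
        (∀ I : Informant, IsInf I → P I → α (β h I) I) ∧
        ∀ L ∈ 𝓛, LearnsWith P β δ h L}

/-! ### Properties of restrictions -/

/-- A learning restriction is delayable if it is preserved under postponing
hypotheses along a non-decreasing unbounded function. -/
def Delayable (δ : Restriction) : Prop :=
  ∀ I I' : Informant, IsInf I → IsInf I' → Set.range I = Set.range I' →
    ∀ (p : HypSeq) (s : ℕ → ℕ), Monotone s → (∀ m, ∃ n, m ≤ s n) →
      δ p I → (∀ n, contentS (segment I (s n)) ⊆ contentS (segment I' n)) →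
      δ (fun n => p (s n)) I'

/-- A learning restriction is semantic if it is indifferent to replacing the
hypothesis sequence by a semantically equivalent one. -/
def Semantic (δ : Restriction) : Prop :=
  ∀ (p p' : HypSeq) (I : Informant), δ p I →
    (∀ i, (p i).Dom ↔ (p' i).Dom) →
    (∀ i, ∀ e ∈ p i, ∀ e' ∈ p' i, W e = W e') →
    δ p' I

/-!
The finite languages together with `ℕ` separate the two collections in one direction, and their
complements, the cofinite languages together with `∅`, in the other.

A learner conjecturing `ℕ` until the first negative datum, and the positive data seen so far from
then on, never conjectures a non-element of the target after `ℕ` has been given up, so it is dual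
monotone. No monotone learner exists: present `ℕ` until the learner conjectures `ℕ`, continue with
the finite language `F` of the data seen so far until the learner conjectures `F`, and then reveal
a fresh `m` as an element of the target. Now `m` lies in the target `F ∪ {m}` and in the first
conjecture, but not in the second. Exchanging positive and negative data gives the other separation.
-/

/-! ### Conjectured languages -/

/-- The learner `h` is defined on the finite sequence `σ` and its hypothesis there denotes `A`.
This states `Bc`, `Mon` and `Mond` in terms of languages instead of indices. -/
def Conjectures (h : Learner) (σ : Seq) (A : Set ℕ) : Prop :=
  ∃ e ∈ h (Encodable.encode σ), W e = A

theorem Conjectures.unique {h : Learner} {σ : Seq} {A B : Set ℕ} (hA : Conjectures h σ A)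
    (hB : Conjectures h σ B) : A = B := by
  obtain ⟨e, he, rfl⟩ := hA
  obtain ⟨e', he', rfl⟩ := hB
  rw [Part.mem_unique he he']

theorem bc_Gop_iff {h : Learner} {I : Informant} :
    Bc (Gop h I) I ↔ ∀ᶠ n in atTop, Conjectures h (segment I n) (posI I) :=
  Iff.rfl

theorem mon_Gop_iff {h : Learner} {I : Informant} :
    Mon (Gop h I) I ↔ ∀ s t, s ≤ t → ∀ A B, Conjectures h (segment I s) A →
      Conjectures h (segment I t) B → A ∩ posI I ⊆ B := by
  constructor
  · rintro hmon s t hst _ _ ⟨e, he, rfl⟩ ⟨e', he', rfl⟩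
    exact (hmon s t hst e he e' he').trans Set.inter_subset_left
  · intro hmon s t hst e he e' he'
    exact Set.subset_inter (hmon s t hst _ _ ⟨e, he, rfl⟩ ⟨e', he', rfl⟩) Set.inter_subset_right

theorem mond_Gop_iff {h : Learner} {I : Informant} :
    Mond (Gop h I) I ↔ ∀ s t, s ≤ t → ∀ A B, Conjectures h (segment I s) A →
      Conjectures h (segment I t) B → Aᶜ ∩ negI I ⊆ Bᶜ := by
  constructor
  · rintro hmond s t hst _ _ ⟨e, he, rfl⟩ ⟨e', he', rfl⟩
    exact (hmond s t hst e he e' he').trans Set.inter_subset_left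
  · intro hmond s t hst e he e' he'
    exact Set.subset_inter (hmond s t hst _ _ ⟨e, he, rfl⟩ ⟨e', he', rfl⟩) Set.inter_subset_right

theorem exists_computable_W_eq {α : Type*} [Primcodable α] {S : α → Set ℕ}
    (hS : REPred fun p : α × ℕ => p.2 ∈ S p.1) :
    ∃ f : α → ℕ, Computable f ∧ ∀ a, W (f a) = S a := by
  obtain ⟨c, hc⟩ := Nat.Partrec.Code.exists_code.1 hS
  refine ⟨fun a => Encodable.encode (c.curry (Encodable.encode a)), ?_, fun a => ?_⟩
  · exact (Primrec.encode.comp <|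
      Nat.Partrec.Code.primrec₂_curry.comp (Primrec.const c) Primrec.encode).to_comp
  · ext x
    have heval : c.eval (Nat.pair (Encodable.encode a) x) =
        (Part.assert (x ∈ S a) fun _ => Part.some ()).map Encodable.encode := by
      have hpair : Nat.pair (Encodable.encode a) x = Encodable.encode (a, x) := rfl
      simp only [hc, hpair, Encodable.encodek, Part.coe_some, Part.bind_some]
    simp [W, Nat.Partrec.Code.eval_curry, heval, Part.assert]

theorem exists_learner_conjectures {H : Seq → Set ℕ}
    (hH : REPred fun p : Seq × ℕ => p.2 ∈ H p.1) :
    ∃ h : Learner, Partrec h ∧ ∀ σ, Conjectures h σ (H σ) := by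
  obtain ⟨f, hf, hW⟩ := exists_computable_W_eq hH
  refine ⟨fun n => ((Encodable.decode (α := Seq) n).map f : Option ℕ),
    (Computable.decode.option_map (hf.comp Computable.snd).to₂).ofOption, fun σ => ⟨f σ, ?_, hW σ⟩⟩
  simp only [Encodable.encodek, Option.map_some, Part.coe_some, Part.mem_some_iff]

/-! ### Finite data and informants -/

/-- The finite sequence `σ` is correct about the language `L`. This is `ConsH` for a language
instead of an index. -/
def Consistent (σ : Seq) (L : Set ℕ) : Prop := posS σ ⊆ L ∧ negS σ ⊆ Lᶜ

theorem consistent_nil (L : Set ℕ) : Consistent [] L := by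
  simp [Consistent, posS, negS]

theorem finite_posS (σ : Seq) : (posS σ).Finite :=
  (List.finite_toSet σ).preimage (Prod.mk_left_injective true).injOn

theorem finite_negS (σ : Seq) : (negS σ).Finite :=
  (List.finite_toSet σ).preimage (Prod.mk_left_injective false).injOn

theorem mem_segment {I : Informant} {n : ℕ} {a : Datum} :
    a ∈ segment I n ↔ ∃ i < n, I i = a := by
  simp [segment]

theorem segment_prefix_segment (I : Informant) {m n : ℕ} (hmn : m ≤ n) :
    segment I m <+: segment I n := by
  obtain ⟨k, rfl⟩ := Nat.exists_eq_add_of_le hmn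
  simp [segment, List.range_add]

theorem posS_mono {σ τ : Seq} (h : σ ⊆ τ) : posS σ ⊆ posS τ := fun _ hx => h hx

theorem negS_mono {σ τ : Seq} (h : σ ⊆ τ) : negS σ ⊆ negS τ := fun _ hx => h hx

theorem eventually_mem_segment {I : Informant} {a : Datum} (ha : ∃ n, I n = a) :
    ∀ᶠ n in atTop, a ∈ segment I n := by
  obtain ⟨i, hi⟩ := ha
  filter_upwards [eventually_gt_atTop i] with n hn
  exact mem_segment.2 ⟨i, hn, hi⟩

namespace IsInformant

variable {I : Informant} {L S : Set ℕ}

theorem consistent_segment (hI : IsInformant I L) (n : ℕ) : Consistent (segment I n) L := by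
  rw [Consistent, ← hI.2, ← hI.1]
  constructor
  · intro x hx
    obtain ⟨i, -, hi⟩ := mem_segment.1 hx
    exact ⟨i, hi⟩
  · intro x hx
    obtain ⟨i, -, hi⟩ := mem_segment.1 hx
    exact ⟨i, hi⟩

theorem eventually_subset_posS (hI : IsInformant I L) (hS : S.Finite) (hSL : S ⊆ L) :
    ∀ᶠ n in atTop, S ⊆ posS (segment I n) := by
  rw [← hI.1] at hSL
  exact hS.eventually_all.2 fun x hx => eventually_mem_segment (hSL hx)

theorem eventually_subset_negS (hI : IsInformant I L) (hS : S.Finite) (hSL : S ⊆ Lᶜ) :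
    ∀ᶠ n in atTop, S ⊆ negS (segment I n) := by
  rw [← hI.2] at hSL
  exact hS.eventually_all.2 fun x hx => eventually_mem_segment (hSL hx)

end IsInformant

/-- The infinite sequence that starts with `σ` and then lists the characteristic function of `L`.
It is an informant for `L` as soon as `σ` is consistent with `L`. -/
noncomputable def extend (σ : Seq) (L : Set ℕ) : Informant := fun i =>
  σ.getD i (i - σ.length, decide (i - σ.length ∈ L))

theorem exists_extend_eq_iff {σ : Seq} {L : Set ℕ} {x : ℕ} {b : Bool} :
    (∃ i, extend σ L i = (x, b)) ↔ (x, b) ∈ σ ∨ decide (x ∈ L) = b := by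
  constructor
  · rintro ⟨i, hi⟩
    rcases lt_or_ge i σ.length with hlt | hge
    · rw [extend, List.getD_eq_getElem _ _ hlt] at hi
      exact Or.inl (hi ▸ List.getElem_mem hlt)
    · rw [extend, List.getD_eq_default _ _ hge] at hi
      obtain ⟨rfl, hb⟩ := Prod.mk.inj hi
      exact Or.inr hb
  · rintro (hmem | rfl)
    · obtain ⟨i, hlt, hi⟩ := List.getElem_of_mem hmem
      exact ⟨i, by rw [extend, List.getD_eq_getElem _ _ hlt, hi]⟩
    · exact ⟨σ.length + x, by simp [extend]⟩

theorem posI_extend (σ : Seq) (L : Set ℕ) : posI (extend σ L) = posS σ ∪ L := by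
  ext x
  simp [posI, posS, exists_extend_eq_iff]

theorem negI_extend (σ : Seq) (L : Set ℕ) : negI (extend σ L) = negS σ ∪ Lᶜ := by
  ext x
  simp [negI, negS, exists_extend_eq_iff]

theorem Consistent.isInformant_extend {σ : Seq} {L : Set ℕ} (hσ : Consistent σ L) :
    IsInformant (extend σ L) L :=
  ⟨by rw [posI_extend, Set.union_eq_right.2 hσ.1], by rw [negI_extend, Set.union_eq_right.2 hσ.2]⟩

theorem segment_extend_of_prefix {σ τ : Seq} (h : σ <+: τ) (L : Set ℕ) :
    segment (extend τ L) σ.length = σ := by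
  refine List.ext_getElem (by simp [segment]) fun i _ hi => ?_
  simp [segment, extend, hi.trans_le h.length_le, h.getElem hi]

/-! ### Behaviorally correct learning -/

/-- The collection `[Inf G δ Bc]`. -/
def InfGBc (δ : Restriction) : Set (Set (Set ℕ)) :=
  Learnable TT AllL AllI Gop (fun p I => δ p I ∧ Bc p I)

theorem mem_infGBc_iff {δ : Restriction} {𝓛 : Set (Set ℕ)} :
    𝓛 ∈ InfGBc δ ↔ ∃ h : Learner, Partrec h ∧
      ∀ L ∈ 𝓛, ∀ I, IsInformant I L → δ (Gop h I) I ∧ Bc (Gop h I) I := by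
  constructor
  · rintro ⟨h, hh, -, -, hlearn⟩
    exact ⟨h, hh, fun L hL I => (hlearn L hL).2 I trivial⟩
  · rintro ⟨h, hh, hlearn⟩
    refine ⟨h, hh, trivial, fun _ _ _ => trivial, fun L hL => ⟨?_, fun I _ => hlearn L hL I⟩⟩
    have hI := (consistent_nil L).isInformant_extend
    obtain ⟨-, e, -, he⟩ := (hlearn L hL _ hI).2.exists
    exact ⟨e, he.trans hI.1⟩

theorem exists_conjectures_of_bc {h : Learner} {L : Set ℕ}
    (hbc : ∀ I, IsInformant I L → Bc (Gop h I) I) {σ : Seq} (hσ : Consistent σ L) :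
    ∃ τ, σ <+: τ ∧ Consistent τ L ∧ Conjectures h τ L := by
  have hI := hσ.isInformant_extend
  obtain ⟨n, hconj, hn⟩ :=
    ((bc_Gop_iff.1 (hbc _ hI)).and (eventually_ge_atTop σ.length)).exists
  rw [hI.1] at hconj
  refine ⟨segment (extend σ L) n, ?_, hI.consistent_segment n, hconj⟩
  simpa only [segment_extend_of_prefix List.prefix_rfl] using segment_prefix_segment (extend σ L) hn

section Prefix

variable {h : Learner} {σ τ : Seq} {A B L : Set ℕ}

theorem inter_subset_of_mon (hmon : ∀ I, IsInformant I L → Mon (Gop h I) I)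
    (hστ : σ <+: τ) (hτ : Consistent τ L) (hA : Conjectures h σ A) (hB : Conjectures h τ B) :
    A ∩ L ⊆ B := by
  have hI := hτ.isInformant_extend
  have hsub := mon_Gop_iff.1 (hmon _ hI) σ.length τ.length hστ.length_le A B
  rw [segment_extend_of_prefix hστ, segment_extend_of_prefix List.prefix_rfl, hI.1] at hsub
  exact hsub hA hB

theorem compl_inter_compl_subset_of_mond (hmond : ∀ I, IsInformant I L → Mond (Gop h I) I)
    (hστ : σ <+: τ) (hτ : Consistent τ L) (hA : Conjectures h σ A) (hB : Conjectures h τ B) :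
    Aᶜ ∩ Lᶜ ⊆ Bᶜ := by
  have hI := hτ.isInformant_extend
  have hsub := mond_Gop_iff.1 (hmond _ hI) σ.length τ.length hστ.length_le A B
  rw [segment_extend_of_prefix hστ, segment_extend_of_prefix List.prefix_rfl, hI.2] at hsub
  exact hsub hA hB

end Prefix

/-! ### Classes that are not learnable -/

theorem notMem_infGBc_mon {𝓛 : Set (Set ℕ)} {A : Set ℕ} (hA : A.Infinite) (hA𝓛 : A ∈ 𝓛)
    (hfin : ∀ F ⊆ A, F.Finite → F ∈ 𝓛) : 𝓛 ∉ InfGBc Mon := by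
  rw [mem_infGBc_iff]
  rintro ⟨h, -, hlearn⟩
  obtain ⟨σ, -, hσA, hconjA⟩ :=
    exists_conjectures_of_bc (fun I hI => (hlearn A hA𝓛 I hI).2) (consistent_nil A)
  have hF : posS σ ∈ 𝓛 := hfin _ hσA.1 (finite_posS σ)
  have hσF : Consistent σ (posS σ) :=
    ⟨subset_rfl, hσA.2.trans (Set.compl_subset_compl.2 hσA.1)⟩
  obtain ⟨τ, hστ, hτF, hconjF⟩ :=
    exists_conjectures_of_bc (fun I hI => (hlearn _ hF I hI).2) hσF
  obtain ⟨m, hmA, hm⟩ := hA.exists_notMem_finite ((finite_posS σ).union (finite_negS τ))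
  obtain ⟨hmσ, hmτ⟩ := not_or.1 hm
  have hmF : insert m (posS σ) ∈ 𝓛 :=
    hfin _ (Set.insert_subset hmA hσA.1) ((finite_posS σ).insert m)
  have hτmF : Consistent τ (insert m (posS σ)) := by
    refine ⟨hτF.1.trans (Set.subset_insert _ _), fun x hx => ?_⟩
    rintro (rfl | hxσ)
    exacts [hmτ hx, hτF.2 hx hxσ]
  have hsub : A ∩ insert m (posS σ) ⊆ posS σ :=
    inter_subset_of_mon (fun I hI => (hlearn _ hmF I hI).1) hστ hτmF hconjA hconjF
  exact hmσ (hsub ⟨hmA, Set.mem_insert _ _⟩)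

theorem notMem_infGBc_mond {𝓛 : Set (Set ℕ)} {A : Set ℕ} (hA : Aᶜ.Infinite) (hA𝓛 : A ∈ 𝓛)
    (hcofin : ∀ C, A ⊆ C → Cᶜ.Finite → C ∈ 𝓛) : 𝓛 ∉ InfGBc Mond := by
  rw [mem_infGBc_iff]
  rintro ⟨h, -, hlearn⟩
  obtain ⟨σ, -, hσA, hconjA⟩ :=
    exists_conjectures_of_bc (fun I hI => (hlearn A hA𝓛 I hI).2) (consistent_nil A)
  have hAσ : A ⊆ (negS σ)ᶜ := Set.subset_compl_comm.1 hσA.2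
  have hC : (negS σ)ᶜ ∈ 𝓛 := hcofin _ hAσ ((compl_compl (negS σ)).symm ▸ finite_negS σ)
  have hσC : Consistent σ (negS σ)ᶜ := ⟨hσA.1.trans hAσ, (compl_compl (negS σ)).ge⟩
  obtain ⟨τ, hστ, hτC, hconjC⟩ :=
    exists_conjectures_of_bc (fun I hI => (hlearn _ hC I hI).2) hσC
  obtain ⟨m, hmA, hm⟩ := hA.exists_notMem_finite ((finite_negS σ).union (finite_posS τ))
  obtain ⟨hmσ, hmτ⟩ := not_or.1 hm
  have hmC : (insert m (negS σ))ᶜ ∈ 𝓛 := by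
    refine hcofin _ (Set.subset_compl_comm.1 (Set.insert_subset hmA hσA.2)) ?_
    rw [compl_compl]
    exact (finite_negS σ).insert m
  have hτmC : Consistent τ (insert m (negS σ))ᶜ := by
    refine ⟨fun x hx => ?_, hτC.2.trans (Set.compl_subset_compl.2 ?_)⟩
    · rintro (rfl | hxσ)
      exacts [hmτ hx, hτC.1 hx hxσ]
    · exact Set.compl_subset_compl.2 (Set.subset_insert _ _)
  have hsub : Aᶜ ∩ (insert m (negS σ))ᶜᶜ ⊆ (negS σ)ᶜᶜ :=
    compl_inter_compl_subset_of_mond (fun I hI => (hlearn _ hmC I hI).1) hστ hτmC hconjA hconjC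
  rw [compl_compl, compl_compl] at hsub
  exact hmσ (hsub ⟨hmA, Set.mem_insert _ _⟩)

/-! ### The two separating classes -/

theorem primrecRel_mem {α : Type*} [Primcodable α] : PrimrecRel fun (l : List α) a => a ∈ l :=
  (PrimrecRel.exists_mem_list Primrec.eq).of_eq fun l a => by simp

theorem primrecPred_exists_mk_mem {α β : Type*} [Primcodable α] [Primcodable β] (b : β) :
    PrimrecPred fun l : List (α × β) => ∃ a, (a, b) ∈ l :=
  (Primrec.eq.comp Primrec.snd (Primrec.const b)).exists_mem_list.of_eq fun l => by simp

/-- The class of all finite languages together with `ℕ`. -/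
def finiteOrUniv : Set (Set ℕ) := insert Set.univ {L | L.Finite}

/-- The class of all cofinite languages together with `∅`. -/
def cofiniteOrEmpty : Set (Set ℕ) := insert ∅ {L | Lᶜ.Finite}

/-- The conjecture of the learner for `finiteOrUniv`: everything before the first negative datum,
and the positive data seen so far afterwards. -/
def univThenPosS (σ : Seq) : Set ℕ := {x | negS σ = ∅ ∨ x ∈ posS σ}

/-- The conjecture of the learner for `cofiniteOrEmpty`: nothing before the first positive datum,
and the complement of the negative data seen so far afterwards. -/
def emptyThenComplNegS (σ : Seq) : Set ℕ := {x | (posS σ).Nonempty ∧ x ∉ negS σ}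

theorem rePred_univThenPosS : REPred fun p : Seq × ℕ => p.2 ∈ univThenPosS p.1 := by
  have hprim : PrimrecPred fun p : Seq × ℕ => (¬∃ y, (y, false) ∈ p.1) ∨ (p.2, true) ∈ p.1 :=
    ((primrecPred_exists_mk_mem false).comp Primrec.fst).not.or
      (primrecRel_mem.comp Primrec.fst (Primrec.snd.pair (Primrec.const true)))
  refine hprim.computablePred.to_re.of_eq fun p => ?_
  simp [univThenPosS, posS, negS, Set.eq_empty_iff_forall_notMem]

theorem rePred_emptyThenComplNegS :
    REPred fun p : Seq × ℕ => p.2 ∈ emptyThenComplNegS p.1 := by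
  have hprim : PrimrecPred fun p : Seq × ℕ => (∃ y, (y, true) ∈ p.1) ∧ (p.2, false) ∉ p.1 :=
    ((primrecPred_exists_mk_mem true).comp Primrec.fst).and
      (primrecRel_mem.comp Primrec.fst (Primrec.snd.pair (Primrec.const false))).not
  exact hprim.computablePred.to_re

theorem eventually_univThenPosS_eq {L : Set ℕ} (hL : L ∈ finiteOrUniv) {I : Informant}
    (hI : IsInformant I L) : ∀ᶠ n in atTop, univThenPosS (segment I n) = L := by
  rcases hL with rfl | hfin
  · refine Eventually.of_forall fun n => Set.eq_univ_of_forall fun x => Or.inl ?_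
    simpa only [Set.compl_univ, Set.subset_empty_iff] using (hI.consistent_segment n).2
  · obtain ⟨z, hz⟩ := hfin.exists_notMem
    filter_upwards [hI.eventually_subset_posS hfin subset_rfl,
      hI.eventually_subset_negS (Set.finite_singleton z) (Set.singleton_subset_iff.2 hz)]
      with n hpos hneg
    refine Set.Subset.antisymm ?_ fun x hx => Or.inr (hpos hx)
    rintro x (hempty | hx)
    · exact absurd (hneg rfl) (Set.eq_empty_iff_forall_notMem.1 hempty z)
    · exact (hI.consistent_segment n).1 hx

theorem eventually_emptyThenComplNegS_eq {L : Set ℕ} (hL : L ∈ cofiniteOrEmpty) {I : Informant}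
    (hI : IsInformant I L) : ∀ᶠ n in atTop, emptyThenComplNegS (segment I n) = L := by
  rcases hL with rfl | hcofin
  · refine Eventually.of_forall fun n => Set.eq_empty_of_forall_notMem ?_
    rintro x ⟨⟨y, hy⟩, -⟩
    exact (hI.consistent_segment n).1 hy
  · obtain ⟨z, hz⟩ := hcofin.exists_notMem
    filter_upwards [hI.eventually_subset_negS hcofin subset_rfl,
      hI.eventually_subset_posS (Set.finite_singleton z)
        (Set.singleton_subset_iff.2 (Set.notMem_compl_iff.1 hz))] with n hneg hpos
    refine Set.Subset.antisymm ?_ fun x hx => ⟨⟨z, hpos rfl⟩, ?_⟩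
    · rintro x ⟨-, hx⟩
      exact Set.notMem_compl_iff.1 fun hxL => hx (hneg hxL)
    · exact fun hxneg => (hI.consistent_segment n).2 hxneg hx

theorem finiteOrUniv_mem_infGBc_mond : finiteOrUniv ∈ InfGBc Mond := by
  obtain ⟨h, hh, hconj⟩ := exists_learner_conjectures rePred_univThenPosS
  refine mem_infGBc_iff.2 ⟨h, hh, fun L hL I hI => ⟨mond_Gop_iff.2 ?_, bc_Gop_iff.2 ?_⟩⟩
  · rintro s t hst A B hA hB x ⟨hxA, hxI⟩ hxB
    rw [hA.unique (hconj _)] at hxA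
    rw [hB.unique (hconj _)] at hxB
    rw [hI.2] at hxI
    rcases hxB with hempty | hx
    · have hsub := negS_mono (segment_prefix_segment I hst).subset
      exact hxA (Or.inl (Set.subset_eq_empty hsub hempty))
    · exact hxI ((hI.consistent_segment t).1 hx)
  · filter_upwards [eventually_univThenPosS_eq hL hI] with n hn
    rw [hI.1, ← hn]
    exact hconj _

theorem cofiniteOrEmpty_mem_infGBc_mon : cofiniteOrEmpty ∈ InfGBc Mon := by
  obtain ⟨h, hh, hconj⟩ := exists_learner_conjectures rePred_emptyThenComplNegS
  refine mem_infGBc_iff.2 ⟨h, hh, fun L hL I hI => ⟨mon_Gop_iff.2 ?_, bc_Gop_iff.2 ?_⟩⟩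
  · rintro s t hst A B hA hB x ⟨hxA, hxI⟩
    rw [hA.unique (hconj _)] at hxA
    rw [hB.unique (hconj _)]
    rw [hI.1] at hxI
    exact ⟨hxA.1.mono (posS_mono (segment_prefix_segment I hst).subset),
      fun hx => (hI.consistent_segment t).2 hx hxI⟩
  · filter_upwards [eventually_emptyThenComplNegS_eq hL hI] with n hn
    rw [hI.1, ← hn]
    exact hconj _

theorem finiteOrUniv_notMem_infGBc_mon : finiteOrUniv ∉ InfGBc Mon :=
  notMem_infGBc_mon Set.infinite_univ (Or.inl rfl) fun _ _ hF => Or.inr hF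

theorem cofiniteOrEmpty_notMem_infGBc_mond : cofiniteOrEmpty ∉ InfGBc Mond :=
  notMem_infGBc_mond (Set.compl_empty ▸ Set.infinite_univ) (Or.inl rfl) fun _ _ hC => Or.inr hC

/-- `[Inf G Mon Bc]` and `[Inf G Mon^d Bc]` are incomparable. -/
theorem mon_dual_mon_incomparable :
    (Learnable TT AllL AllI Gop (fun p I => Mon p I ∧ Bc p I) \
      Learnable TT AllL AllI Gop (fun p I => Mond p I ∧ Bc p I)).Nonempty ∧
    (Learnable TT AllL AllI Gop (fun p I => Mond p I ∧ Bc p I) \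
      Learnable TT AllL AllI Gop (fun p I => Mon p I ∧ Bc p I)).Nonempty :=
  ⟨⟨cofiniteOrEmpty, cofiniteOrEmpty_mem_infGBc_mon, cofiniteOrEmpty_notMem_infGBc_mond⟩,
    ⟨finiteOrUniv, finiteOrUniv_mem_infGBc_mond, finiteOrUniv_notMem_infGBc_mon⟩⟩

end InfBc
end

section
/- Global consistency does not restrict set-driven behaviorally correct learning from informants: [τ(Cons) Inf Sd Bc] = [Inf Sd Bc]. -/
open Filter Classical

namespace InfBc

/-!
A set-driven hypothesis can be made consistent after the fact. Given data `D` and a conjectured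
language `A`, the set `pos(D) ∪ (A \ neg(D))` is consistent with `D`, equals `A` as soon as `A` was
consistent with `D`, and is enumerable uniformly in `D` and in a partial computable description of
`A`. By the s-m-n theorem an index for it is found without waiting for the original learner to
converge, so the new learner is total, depends only on `D`, and keeps every correct hypothesis.
-/

section RecursivelyEnumerable

variable {α β : Type*} [Primcodable α] [Primcodable β] {p q : α → Prop}

lemma rePred_comp {f : β → α} (hp : REPred p) (hf : Computable f) : REPred fun b => p (f b) :=
  Partrec.comp hp hf

lemma rePred_and (hp : REPred p) (hq : REPred q) : REPred fun a => p a ∧ q a :=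
  (Partrec.bind hp (rePred_comp hq Computable.fst).to₂).dom_re.of_eq fun a => by
    simp [Part.assert]

lemma rePred_or (hp : REPred p) (hq : REPred q) : REPred fun a => p a ∨ q a := by
  obtain ⟨k, hk, hkdom⟩ := Partrec.merge' hp hq
  exact hk.dom_re.of_eq fun a => by simp [(hkdom a).2, Part.assert]

lemma rePred_exists_mem {f : α →. β} {r : α → β → Prop} (hf : Partrec f)
    (hr : REPred fun x : α × β => r x.1 x.2) : REPred fun a => ∃ b ∈ f a, r a b :=
  (Partrec.bind hf hr.to₂).dom_re.of_eq fun a => by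
    simp [Part.assert, Part.mem_eq]

lemma rePred_mem_W : REPred fun x : ℕ × ℕ => x.2 ∈ W x.1 :=
  (Nat.Partrec.Code.eval_part.comp ((Computable.ofNat _).comp Computable.fst)
    Computable.snd).dom_re

lemma exists_computable_W_eq_s17 {A : ℕ → Set ℕ} (hA : REPred fun x : ℕ × ℕ => x.2 ∈ A x.1) :
    ∃ g : ℕ → ℕ, Computable g ∧ ∀ n, W (g n) = A n := by
  have hpartrec : Partrec fun m : ℕ => (Part.assert (m.unpair.2 ∈ A m.unpair.1) fun _ =>
      Part.some ()).map fun _ => 0 :=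
    (rePred_comp hA Computable.unpair).map (Computable.const 0).to₂
  obtain ⟨c, hc⟩ := Nat.Partrec.Code.exists_code.1 (Partrec.nat_iff.1 hpartrec)
  refine ⟨fun n => Encodable.encode (c.curry n), Computable.encode.comp
    (Nat.Partrec.Code.primrec₂_curry.to_comp.comp (Computable.const c) Computable.id), ?_⟩
  intro n
  ext x
  simp [W, hc, Part.assert]

lemma primrecRel_list_mem : PrimrecRel fun (l : List α) (a : α) => a ∈ l := by
  simpa using PrimrecRel.exists_mem_list (R := fun a b : α => a = b) Primrec.eq

end RecursivelyEnumerable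

section Patch

variable {σ τ : Seq} {A : Set ℕ} {I : Informant}

/-- The language `A` corrected on the data `σ`: positive data are added, negative data removed. -/
def patch (σ : Seq) (A : Set ℕ) : Set ℕ := posS σ ∪ A \ negS σ

lemma patch_congr_contentS (h : contentS σ = contentS τ) : patch σ A = patch τ A := by
  have mem_iff (a : Datum) : a ∈ σ ↔ a ∈ τ := Set.ext_iff.1 h a
  simp only [patch, posS, negS, mem_iff]

lemma patch_eq_self (hpos : posS σ ⊆ A) (hneg : Disjoint A (negS σ)) : patch σ A = A := by
  rw [patch, hneg.sdiff_eq_left, Set.union_eq_right.2 hpos]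

lemma consH_of_W_eq_patch {e : ℕ} (hσ : Disjoint (posS σ) (negS σ)) (he : W e = patch σ A) :
    ConsH e σ := by
  rw [ConsH, he]
  refine ⟨Set.subset_union_left, Set.disjoint_iff_inter_eq_empty.1 ?_⟩
  exact (Set.disjoint_union_left.2 ⟨hσ, Set.disjoint_sdiff_left⟩).symm

lemma posS_segment_subset (I : Informant) (n : ℕ) : posS (segment I n) ⊆ posI I := fun _ hx =>
  let ⟨k, _, hk⟩ := List.mem_map.1 hx
  ⟨k, hk⟩

lemma negS_segment_subset (I : Informant) (n : ℕ) : negS (segment I n) ⊆ negI I := fun _ hx =>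
  let ⟨k, _, hk⟩ := List.mem_map.1 hx
  ⟨k, hk⟩

lemma IsInformant.isInf {L : Set ℕ} (hI : IsInformant I L) : IsInf I :=
  ⟨rfl, hI.1 ▸ hI.2⟩

lemma IsInf.disjoint_posI_negS_segment (hI : IsInf I) (n : ℕ) :
    Disjoint (posI I) (negS (segment I n)) :=
  (hI.2 ▸ disjoint_compl_right : Disjoint (posI I) (negI I)).mono_right (negS_segment_subset I n)

end Patch

section CodedData

/-- A list of the data in the finite set coded by `n`. Finite sets carry no `Primcodable` instance,
so the learner's input is read as a list; the junk value is `[]`. -/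
def dataOfCode (n : ℕ) : Seq := (Encodable.decode (α := Seq) n).getD []

lemma primrec_dataOfCode : Primrec dataOfCode :=
  Primrec.option_getD.comp Primrec.decode (Primrec.const [])

lemma contentS_dataOfCode_encode (s : Finset Datum) :
    contentS (dataOfCode (Encodable.encode s)) = s := by
  -- A finite set is coded as a sorted list, and decoded by forgetting the order of that list.
  have hdecode : (Encodable.decode (α := Seq) (Encodable.encode s.val)).map
      ((↑) : Seq → Multiset Datum) = some s.val :=
    Encodable.encodek s.val
  obtain ⟨l, hl, hls⟩ := Option.map_eq_some_iff.1 hdecode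
  have hdata : dataOfCode (Encodable.encode s) = l :=
    congrArg (Option.getD · []) hl
  ext a
  rw [hdata, Finset.mem_coe, ← Finset.mem_val, ← hls]
  rfl

lemma computablePred_mem_dataOfCode (b : Bool) :
    ComputablePred fun x : ℕ × ℕ => (x.2, b) ∈ dataOfCode x.1 :=
  (primrecRel_list_mem.comp (primrec_dataOfCode.comp Primrec.fst)
    (Primrec.snd.pair (Primrec.const b))).computablePred

end CodedData

section PatchedLearner

variable {h : Learner} {g : ℕ → ℕ} {I : Informant}

/-- The language conjectured by a possibly undefined hypothesis, which is empty if there is none. -/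
def conjecture (p : Part ℕ) : Set ℕ := {x | ∃ e ∈ p, x ∈ W e}

lemma conjecture_eq_of_mem {p : Part ℕ} {e : ℕ} (he : e ∈ p) : conjecture p = W e := by
  ext x
  exact ⟨fun ⟨_, he', hx⟩ => Part.mem_unique he' he ▸ hx, fun hx => ⟨e, he, hx⟩⟩

/-- On (the code of) every content, the total learner `g` conjectures the language conjectured by
`h`, corrected on that content. -/
def IsPatchOf (g : ℕ → ℕ) (h : Learner) : Prop :=
  ∀ σ : Seq, W (g (Encodable.encode σ.toFinset)) =
    patch σ (conjecture (h (Encodable.encode σ.toFinset)))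

lemma exists_computable_isPatchOf (hh : Partrec h) : ∃ g, Computable g ∧ IsPatchOf g h := by
  have hmem_W : REPred fun y : (ℕ × ℕ) × ℕ => y.1.2 ∈ W y.2 :=
    rePred_comp (f := fun y : (ℕ × ℕ) × ℕ => (y.2, y.1.2)) rePred_mem_W
      (Computable.snd.pair (Computable.snd.comp Computable.fst))
  have hconjecture : REPred fun x : ℕ × ℕ => x.2 ∈ conjecture (h x.1) :=
    rePred_exists_mem (hh.comp Computable.fst) hmem_W
  have hpatch : REPred fun x : ℕ × ℕ => x.2 ∈ patch (dataOfCode x.1) (conjecture (h x.1)) :=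
    rePred_or (computablePred_mem_dataOfCode true).to_re
      (rePred_and hconjecture (computablePred_mem_dataOfCode false).not.to_re)
  obtain ⟨g, hg, hW⟩ := exists_computable_W_eq_s17
    (A := fun n => patch (dataOfCode n) (conjecture (h n))) hpatch
  refine ⟨g, hg, fun σ => (hW _).trans (patch_congr_contentS ?_)⟩
  rw [contentS_dataOfCode_encode, List.coe_toFinset, contentS]

lemma IsPatchOf.cons (hgh : IsPatchOf g h) (hI : IsInf I) : Cons (Sdop g I) I := fun n =>
  have hsegment : Disjoint (posS (segment I n)) (negS (segment I n)) :=
    (hI.disjoint_posI_negS_segment n).mono_left (posS_segment_subset I n)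
  ⟨_, Part.mem_some _, consH_of_W_eq_patch hsegment (hgh _)⟩

lemma IsPatchOf.bc (hgh : IsPatchOf g h) (hI : IsInf I) (hbc : Bc (Sdop h I) I) :
    Bc (Sdop g I) I := by
  refine hbc.mono fun n ⟨e, he, hWe⟩ => ⟨_, Part.mem_some _, ?_⟩
  have hcorrect : conjecture (h (Encodable.encode (segment I n).toFinset)) = posI I :=
    (conjecture_eq_of_mem he).trans hWe
  rw [hgh, hcorrect]
  exact patch_eq_self (posS_segment_subset I n) (hI.disjoint_posI_negS_segment n)

end PatchedLearner

theorem global_cons_no_restriction_sd_bc_general {C : Learner → Prop}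
    (hC : ∀ h, TotalL h → C h) (P : Informant → Prop) :
    Learnable Cons C P Sdop Bc = Learnable TT AllL P Sdop Bc := by
  refine Set.Subset.antisymm ?_ ?_
  · rintro 𝓛 ⟨h, hh, -, -, hlearns⟩
    exact ⟨h, hh, trivial, fun _ _ _ => trivial, hlearns⟩
  · rintro 𝓛 ⟨h, hh, -, -, hlearns⟩
    obtain ⟨g, hg, hgh⟩ := exists_computable_isPatchOf hh
    refine ⟨g, hg, hC g fun _ => trivial, fun I hI _ => hgh.cons hI, fun L hL => ?_⟩
    obtain ⟨hre, hbc⟩ := hlearns L hL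
    exact ⟨hre, fun I hP hI => hgh.bc hI.isInf (hbc I hP hI)⟩

/-- `[τ(Cons) Inf Sd Bc] = [Inf Sd Bc]`. -/
theorem global_cons_no_restriction_sd_bc :
    Learnable Cons AllL AllI Sdop Bc = Learnable TT AllL AllI Sdop Bc :=
  global_cons_no_restriction_sd_bc_general (fun _ _ => trivial) AllI

end InfBc
end
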